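/- Let f : D → {0,1} be a partial function with D ⊆ [M]^n, and let f_CS be the cheat sheet version of f built from a certifying function for f with c = 10·log₂ n copies of f. Then R(f_CS) = Ω(R(f)/c) = Ω̃(R(f)). -/

import Mathlib

open scoped BigOperators ENNReal

namespace QC

/-! ### Inputs and partial functions -/

/-- An input assigns to each index `i` a symbol from the alphabet `Fin (α i)`. -/
abbrev Input (ι : Type) (α : ι → ℕ) := ∀ i : ι, Fin (α i)

/-- A (possibly partial) Boolean-valued query function; `none` means the input
is outside the promise/domain. -/
abbrev PartialFn (ι : Type) (α : ι → ℕ) := Input ι α → Option Bool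

/-- A total function has every input in its domain. -/
def TotalFn {ι : Type} {α : ι → ℕ} (f : PartialFn ι α) : Prop := ∀ x, f x ≠ none

/-- Classical truth value of a proposition, as a `Bool`. -/
noncomputable def ofProp (P : Prop) : Bool := @decide P (Classical.propDecidable P)

/-! ### Decision trees and classical query complexity -/

/-- Decision trees over index set `ι` with alphabets `α` and leaf labels `L`. -/
inductive DTree (ι : Type) (α : ι → ℕ) (L : Type) : Type
  | leaf : L → DTree ι α L
  | node : (i : ι) → (Fin (α i) → DTree ι α L) → DTree ι α L

namespace DTree

variable {ι : Type} {α : ι → ℕ} {L : Type}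

/-- Evaluate a decision tree on an input. -/
def eval : DTree ι α L → Input ι α → L
  | leaf b, _ => b
  | node i child, x => eval (child (x i)) x

/-- The number of queries the tree makes on a given input. -/
def cost : DTree ι α L → Input ι α → ℕ
  | leaf _, _ => 0
  | node i child, x => cost (child (x i)) x + 1

/-- The depth (worst-case number of queries) of a decision tree. -/
def depth : DTree ι α L → ℕ
  | leaf _ => 0
  | node _ child => (Finset.univ.sup fun a => depth (child a)) + 1

end DTree

variable {ι : Type} {α : ι → ℕ}

/-- Deterministic query complexity `D(f)`. -/
noncomputable def Dq (f : PartialFn ι α) : ℕ :=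
  sInf {d | ∃ T : DTree ι α (Option Bool), T.depth ≤ d ∧
    ∀ x b, f x = some b → T.eval x = some b}

/-- Bounded-error randomized query complexity `R(f)` (worst-case queries,
success probability at least 2/3 on every domain input). -/
noncomputable def Rq (f : PartialFn ι α) : ℕ :=
  sInf {d | ∃ μ : PMF (DTree ι α (Option Bool)),
    (∀ T ∈ μ.support, T.depth ≤ d) ∧
    ∀ x b, f x = some b → 2/3 ≤ μ.toOuterMeasure {T | T.eval x = some b}}

/-- Zero-error randomized query complexity `R₀(f)` (worst-case queries): the
algorithm never errs, and outputs `none` ("don't know") with probability at most 1/2. -/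
noncomputable def R0q (f : PartialFn ι α) : ℕ :=
  sInf {d | ∃ μ : PMF (DTree ι α (Option Bool)),
    (∀ T ∈ μ.support, T.depth ≤ d) ∧
    (∀ T ∈ μ.support, ∀ x b, f x = some b → T.eval x = some b ∨ T.eval x = none) ∧
    ∀ x b, f x = some b → μ.toOuterMeasure {T | T.eval x = none} ≤ 1/2}

/-- Zero-error randomized query complexity, measured by the worst-case *expected*
number of queries over domain inputs (value in `ℝ≥0∞`). -/
noncomputable def R0expq (f : PartialFn ι α) : ℝ≥0∞ :=
  sInf {c | ∃ μ : PMF (DTree ι α (Option Bool)),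
    (∀ T ∈ μ.support, ∀ x b, f x = some b → T.eval x = some b ∨ T.eval x = none) ∧
    (∀ x b, f x = some b → μ.toOuterMeasure {T | T.eval x = none} ≤ 1/2) ∧
    (∀ x b, f x = some b → ∑' T, μ T * (T.cost x : ℝ≥0∞) ≤ c)}

/-- One-sided-error randomized query complexity `R₁(f)`: accept every 1-input with
probability at least 2/3, and never accept a 0-input. -/
noncomputable def R1q (f : PartialFn ι α) : ℕ :=
  sInf {d | ∃ μ : PMF (DTree ι α (Option Bool)),
    (∀ T ∈ μ.support, T.depth ≤ d) ∧
    (∀ x, f x = some true → 2/3 ≤ μ.toOuterMeasure {T | T.eval x = some true}) ∧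
    (∀ x, f x = some false → ∀ T ∈ μ.support, T.eval x ≠ some true)}

/-! ### Quantum query complexity -/

/-- The index set of the state space of a quantum query algorithm:
a query register `Σ i, Fin (α i)` together with a workspace register `Fin W`. -/
abbrev QIdx (ι : Type) (α : ι → ℕ) (W : ℕ) := (Σ i : ι, Fin (α i)) × Fin W

variable [Fintype ι] [DecidableEq ι]

/-- The standard query oracle for input `x`: the permutation matrix sending the basis
vector `|i,a⟩|w⟩` to `|i, a + x i⟩|w⟩` (addition modulo `α i`). -/
noncomputable def oracleMatrix (W : ℕ) (x : Input ι α) :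
    Matrix (QIdx ι α W) (QIdx ι α W) ℂ :=
  Matrix.of fun j j' =>
    if j.2 = j'.2 ∧ j.1 = ⟨j'.1.1, j'.1.2 + x j'.1.1⟩ then 1 else 0

/-- The product `U_T · O · U_{T-1} · O ⋯ O · U_0` of unitaries interleaved with oracle
calls, defining a `T`-query quantum algorithm. -/
noncomputable def qProd {τ : Type} [Fintype τ] (U : ℕ → Matrix τ τ ℂ) (Ox : Matrix τ τ ℂ) :
    ℕ → Matrix τ τ ℂ
  | 0 => U 0
  | t + 1 => U (t + 1) * Ox * qProd U Ox t

/-- A quantum query algorithm: a number `T` of queries, a workspace size `W`,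
unitaries `U 0, …, U T`, a unit initial state, and a measurement assigning to each
basis state an output in `Option Bool` (`none` = "don't know"). -/
structure QAlg (ι : Type) [Fintype ι] [DecidableEq ι] (α : ι → ℕ) where
  T : ℕ
  W : ℕ
  U : ℕ → Matrix (QIdx ι α W) (QIdx ι α W) ℂ
  unitary : ∀ t, U t ∈ Matrix.unitaryGroup (QIdx ι α W) ℂ
  init : QIdx ι α W → ℂ
  init_norm : ∑ j, ‖init j‖ ^ 2 = 1
  out : QIdx ι α W → Option Bool

/-- The final state of a quantum algorithm on input `x`. -/
noncomputable def QAlg.finalState (A : QAlg ι α) (x : Input ι α) : QIdx ι α A.W → ℂ :=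
  (qProd A.U (oracleMatrix A.W x) A.T).mulVec A.init

/-- The probability that the algorithm outputs `v` on input `x`. -/
noncomputable def QAlg.outProb (A : QAlg ι α) (x : Input ι α) (v : Option Bool) : ℝ :=
  ∑ j, if A.out j = v then ‖A.finalState x j‖ ^ 2 else 0

/-- Bounded-error quantum query complexity `Q(f)`. -/
noncomputable def Qq (f : PartialFn ι α) : ℕ :=
  sInf {d | ∃ A : QAlg ι α, A.T ≤ d ∧
    ∀ x b, f x = some b → (2 : ℝ)/3 ≤ A.outProb x (some b)}

/-- Exact quantum query complexity `Q_E(f)`. -/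
noncomputable def QEq (f : PartialFn ι α) : ℕ :=
  sInf {d | ∃ A : QAlg ι α, A.T ≤ d ∧
    ∀ x b, f x = some b → A.outProb x (some b) = 1}

/-- One-sided-error quantum query complexity `Q₁(f)`. -/
noncomputable def Q1q (f : PartialFn ι α) : ℕ :=
  sInf {d | ∃ A : QAlg ι α, A.T ≤ d ∧
    (∀ x, f x = some true → (2 : ℝ)/3 ≤ A.outProb x (some true)) ∧
    (∀ x, f x = some false → A.outProb x (some true) = 0)}

/-- Zero-error quantum query complexity `Q₀(f)`: never wrong, outputs `none`
with probability at most 1/2. -/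
noncomputable def Q0q (f : PartialFn ι α) : ℕ :=
  sInf {d | ∃ A : QAlg ι α, A.T ≤ d ∧
    ∀ x b, f x = some b → A.outProb x (some !b) = 0 ∧ A.outProb x none ≤ 1/2}

/-! ### Certificate complexity -/

/-- A partial assignment `ρ` is consistent with an input `x`. -/
def Consistent (ρ : ∀ i : ι, Option (Fin (α i))) (x : Input ι α) : Prop :=
  ∀ i v, ρ i = some v → x i = v

/-- The number of fixed positions of a partial assignment. -/
noncomputable def certSize (ρ : ∀ i : ι, Option (Fin (α i))) : ℕ :=
  Nat.card {i // (ρ i).isSome}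

/-- The certificate complexity of `f` at input `x`: the least size of a partial
assignment consistent with `x` forcing the value `f x` on all domain inputs. -/
noncomputable def CxAt (f : PartialFn ι α) (x : Input ι α) : ℕ :=
  sInf {s | ∃ ρ, Consistent ρ x ∧ (∀ y, Consistent ρ y → f y = none ∨ f y = f x) ∧
    certSize ρ ≤ s}

/-- Certificate complexity `C(f)`. -/
noncomputable def Cq (f : PartialFn ι α) : ℕ :=
  sSup {s | ∃ x, f x ≠ none ∧ s = CxAt f x}

/-- One-certificate complexity `C¹(f)`. -/
noncomputable def C1q (f : PartialFn ι α) : ℕ :=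
  sSup {s | ∃ x, f x = some true ∧ s = CxAt f x}

/-! ### Polynomial degree -/

/-- Exact polynomial degree `deg(f)`: least degree of a real polynomial agreeing
with `f` (as a 0/1 function of the numerical values of the input symbols) on its domain. -/
noncomputable def degq (f : PartialFn ι α) : ℕ :=
  sInf {d | ∃ p : MvPolynomial ι ℝ, p.totalDegree ≤ d ∧
    ∀ x b, f x = some b →
      MvPolynomial.eval (fun i => ((x i : ℕ) : ℝ)) p = if b then 1 else 0}

/-- Approximate polynomial degree `adeg(f)`: least degree of a real polynomial
approximating `f` pointwise to error 1/3 on its domain. -/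
noncomputable def adegq (f : PartialFn ι α) : ℕ :=
  sInf {d | ∃ p : MvPolynomial ι ℝ, p.totalDegree ≤ d ∧
    ∀ x b, f x = some b →
      |MvPolynomial.eval (fun i => ((x i : ℕ) : ℝ)) p - if b then 1 else 0| ≤ 1/3}

end QC
/-! ### Certifying functions and cheat sheets -/

namespace QC

variable {ι : Type} {α : ι → ℕ}

/-- `φ` is a certifying function for the partial function `f`: it accepts `(x, y)`
only when `x` is in the domain of `f` and the first bit of `y` equals `f x`; every
domain input has some accepted certificate `y`; and the all-zeros `y` is never accepted. -/
def IsCertifying {k : ℕ} (hk : 0 < k) (f : PartialFn ι α)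
    (φ : Input ι α → (Fin k → Fin 2) → Bool) : Prop :=
  (∀ x y, f x = none → φ x y = false) ∧
  (∀ x y b, f x = some b → y ⟨0, hk⟩ ≠ (if b then 1 else 0) → φ x y = false) ∧
  (∀ x b, f x = some b → ∃ y, φ x y = true) ∧
  (∀ x, φ x (fun _ => 0) = false)

/-- The index set of the input to a certifying function, viewed as a query function:
the original input together with `k` certificate bits. -/
abbrev CertIdx (ι : Type) (k : ℕ) := ι ⊕ Fin k

/-- Alphabets for `CertIdx`. -/
def certAlphabet (α : ι → ℕ) (k : ℕ) : CertIdx ι k → ℕ := Sum.elim α fun _ => 2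

/-- A certifying function viewed as a total query function on input ⊕ certificate bits. -/
def certFn {k : ℕ} (φ : Input ι α → (Fin k → Fin 2) → Bool) :
    PartialFn (CertIdx ι k) (certAlphabet α k) :=
  fun z => some (φ (fun i => z (Sum.inl i)) (fun q => z (Sum.inr q)))

/-- The index set of the input to the cheat sheet version of a function: `c` copies of
the original input, followed by `2^c` cells each holding `c` certificate strings of `k` bits. -/
abbrev CSIdx (ι : Type) (c k : ℕ) := (Fin c × ι) ⊕ (Fin (2 ^ c) × Fin c × Fin k)

/-- Alphabets for `CSIdx`. -/
def csAlphabet (α : ι → ℕ) (c k : ℕ) : CSIdx ι c k → ℕ :=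
  Sum.elim (fun p => α p.2) fun _ => 2

/-- The `i`-th copy of the original input inside a cheat sheet input. -/
def csX {c k : ℕ} (z : Input (CSIdx ι c k) (csAlphabet α c k)) (i : Fin c) : Input ι α :=
  fun p => z (Sum.inl (i, p))

/-- The `i`-th certificate string in the `ℓ`-th cheat sheet cell. -/
def csY {c k : ℕ} (z : Input (CSIdx ι c k) (csAlphabet α c k)) (ℓ : Fin (2 ^ c))
    (i : Fin c) : Fin k → Fin 2 :=
  fun q => z (Sum.inr (ℓ, i, q))

/-- The number in `[2^c]` whose binary representation is the bit string `b`. -/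
def binToFin (c : ℕ) (b : Fin c → Bool) : Fin (2 ^ c) :=
  ⟨(∑ i, if b i then 2 ^ (i : ℕ) else 0) % 2 ^ c, Nat.mod_lt _ (by positivity)⟩

/-- The defining condition of the cheat sheet function: all `c` copies lie in the
domain of `f`, and the cell addressed by their `f`-values holds certificates
accepted by `φ` for each copy. -/
def CSCond {c k : ℕ} (f : PartialFn ι α) (φ : Input ι α → (Fin k → Fin 2) → Bool)
    (z : Input (CSIdx ι c k) (csAlphabet α c k)) : Prop :=
  ∃ bvec : Fin c → Bool, (∀ i, f (csX z i) = some (bvec i)) ∧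
    ∀ i, φ (csX z i) (csY z (binToFin c bvec) i) = true

/-- The cheat sheet version of `f` with respect to the certifying function `φ`,
with `c` copies of `f`. It is a total function. -/
noncomputable def cheatSheet (c : ℕ) {k : ℕ} (f : PartialFn ι α)
    (φ : Input ι α → (Fin k → Fin 2) → Bool) :
    PartialFn (CSIdx ι c k) (csAlphabet α c k) :=
  fun z => some (ofProp (CSCond f φ z))

/-! ### OR / AND compositions -/

/-- The `OR` function on `m` bits (alphabet `Fin 2`). -/
def orFn (m : ℕ) (z : Fin m → Fin 2) : Fin 2 := if ∃ j, z j = 1 then 1 else 0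

/-- The `AND` function on `m` bits (alphabet `Fin 2`). -/
def andFn (m : ℕ) (z : Fin m → Fin 2) : Fin 2 := if ∀ j, z j = 1 then 1 else 0

/-- The composition `f ∘ OR_m`. -/
def composeOr {n : ℕ} (f : PartialFn (Fin n) fun _ => 2) (m : ℕ) :
    PartialFn (Fin n × Fin m) (fun _ => 2) :=
  fun z => f fun i => orFn m fun j => z (i, j)

/-- The composition `f ∘ AND_m ∘ OR_m`. -/
def composeAndOr {n : ℕ} (f : PartialFn (Fin n) fun _ => 2) (m : ℕ) :
    PartialFn (Fin n × Fin m × Fin m) (fun _ => 2) :=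
  fun z => f fun i => andFn m fun j => orFn m fun l => z (i, j, l)

/-! ### k-SUM, Block k-sum, BKK and its recursive composition -/

/-- The `k`-SUM function on `n` numbers from `[q]`: is there a set of `k` of the
input numbers summing to `0` modulo `q`? -/
noncomputable def kSUMfn (n q k : ℕ) : PartialFn (Fin n) (fun _ => q) :=
  fun x => some (ofProp (∃ S : Finset (Fin n), S.card = k ∧
    (∑ i ∈ S, (x i : ℕ)) % q = 0))

/-- Number of ones in a block of bits. -/
def onesCount {B : ℕ} (z : Fin B → Fin 2) : ℕ := (Finset.univ.filter fun j => z j = 1).card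

/-- The number encoded in binary by a block of bits. -/
def blockVal {B : ℕ} (z : Fin B → Fin 2) : ℕ := ∑ j, if z j = 1 then 2 ^ (j : ℕ) else 0

/-- A block is balanced if it has an equal number of 0s and 1s. -/
def isBalanced {B : ℕ} (z : Fin B → Fin 2) : Prop := 2 * onesCount z = B

/-- Block `k`-sum on `nb` blocks of `B` bits each: value 1 iff there are `k` balanced
blocks whose encoded numbers sum to 0 (mod `2^B`) and every other block has at least
as many 1s as 0s. -/
noncomputable def blockKSumBool (nb B k : ℕ) (z : Fin nb × Fin B → Fin 2) : Bool :=
  ofProp (∃ S : Finset (Fin nb), S.card = k ∧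
    (∀ i ∈ S, isBalanced fun j => z (i, j)) ∧
    (∑ i ∈ S, blockVal fun j => z (i, j)) % 2 ^ B = 0 ∧
    ∀ i ∉ S, B ≤ 2 * onesCount fun j => z (i, j))

/-- The Boolean version of `k`-SUM on `m` numbers of `w` bits each (mod `2^w`). -/
noncomputable def kSumBool (m w k : ℕ) (z : Fin m × Fin w → Fin 2) : Bool :=
  ofProp (∃ S : Finset (Fin m), S.card = k ∧
    (∑ i ∈ S, blockVal fun j => z (i, j)) % 2 ^ w = 0)

/-- Block size of the outer Block `k`-sum in `BKK` on (roughly) `n` outer bits. -/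
def bkkB (n k : ℕ) : ℕ := 10 * k * Nat.log 2 n
/-- Number of blocks of the outer Block `k`-sum in `BKK`. -/
def bkkNB (n k : ℕ) : ℕ := n / bkkB n k
/-- Bits per number of the inner Boolean `k`-SUM in `BKK`. -/
def bkkW (n k : ℕ) : ℕ := k * Nat.log 2 n
/-- Number of numbers of the inner Boolean `k`-SUM in `BKK`. -/
def bkkM (n k : ℕ) : ℕ := n / bkkW n k

/-- The index set of the inputs of `BKK_{n²,k}` (one inner `k`-SUM input bit for
each outer Block `k`-sum input bit; roughly `n²` bits in total). -/
abbrev BKKIdx (n k : ℕ) := (Fin (bkkNB n k) × Fin (bkkB n k)) × (Fin (bkkM n k) × Fin (bkkW n k))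

/-- `BKK_{n²,k}`: Block `k`-sum composed with the Boolean version of `k`-SUM. -/
noncomputable def bkkBool (n k : ℕ) (z : BKKIdx n k → Fin 2) : Bool :=
  blockKSumBool (bkkNB n k) (bkkB n k) k fun ob =>
    if kSumBool (bkkM n k) (bkkW n k) k (fun p => z (ob, p)) then 1 else 0

/-- `BKK_{n²,k}` as a total query function. -/
noncomputable def BKKfn (n k : ℕ) : PartialFn (BKKIdx n k) (fun _ => 2) :=
  fun z => some (bkkBool n k z)

/-- The `d`-fold self-composition of a total Boolean function `g`: a depth-`d` tree
each of whose internal nodes is a copy of `g`; input bits are indexed by root-to-leaf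
paths `Fin d → I`. -/
noncomputable def iterFn {I : Type} (g : (I → Fin 2) → Bool) :
    (d : ℕ) → ((Fin d → I) → Fin 2) → Bool
  | 0, z => decide (z (fun i => i.elim0) = 1)
  | d + 1, z => g fun a => if iterFn g d (fun v => z (Fin.cons a v)) then 1 else 0

/-- The recursion depth used for `RecBKK`: `d = (4/25)·log n / log log n`. -/
def recD (n : ℕ) : ℕ := 4 * Nat.log 2 n / (25 * Nat.log 2 (Nat.log 2 n))

/-- The index set of the inputs of `RecBKK`. -/
abbrev RecIdx (n : ℕ) := Fin (recD n) → BKKIdx n (Nat.log 2 n)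

/-- `RecBKK`: the `recD n`-fold self-composition of `BKK` with `k = log n`. -/
noncomputable def RecBKKfn (n : ℕ) : PartialFn (RecIdx n) (fun _ => 2) :=
  fun z => some (iterFn (bkkBool n (Nat.log 2 n)) (recD n) z)

/-- The nominal input size `N = n^{2d}` of `RecBKK`. -/
def recN (n : ℕ) : ℕ := n ^ (2 * recD n)

end QC


/-! Let `μ` be an optimal randomized algorithm for `f_CS`. On copies of `f` with values `b` and an
all-zero array of cells, `f_CS` is `0`, but writing certificates into the cell addressed by `b`
makes it `1`; hence `μ` reads that cell with probability at least `1 - 2 * (1 / 3) = 1 / 3`.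

Let the copies be independent samples from a distribution `ν` on the domain of `f`. Averaging four
times over `μ`, one finds four decision trees that together read the cell of `b` except with
probability `(2 / 3) ^ 4`; they leave at most `4 * R(f_CS)` candidates for `b`. The halving
algorithm, which predicts each bit by a majority vote among the candidates agreeing with the
preceding bits, errs on at most `log₂ (4 * R(f_CS))` of the `c` bits whenever `b` is a candidate.
So, unless `R(f) ≤ n ≤ 4 * R(f_CS)`, some bit `i` is mispredicted with probability at most
`1 / 10 + 16 / 81 ≤ 1 / 3`. Planting an input `x` at position `i` and fixing the other copies
turns this prediction into an algorithm for `f x` that makes `4 * R(f_CS)` queries and has error at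
most `1 / 3` under `ν`. As `ν` was arbitrary, Yao's principle gives `R(f) ≤ 4 * R(f_CS)`. -/

namespace QC

open MeasureTheory Function

section DecisionTrees

variable {ι κ : Type} {α : ι → ℕ} {β : κ → ℕ} {L L' : Type} {d e : ℕ}

/-- `F` is computed by a decision tree of depth at most `d`. -/
def ComputableIn (d : ℕ) (F : Input ι α → L) : Prop :=
  ∃ T : DTree ι α L, T.depth ≤ d ∧ ∀ x, T.eval x = F x

lemma DTree.depth_child_lt (i : ι) (child : Fin (α i) → DTree ι α L) (a : Fin (α i)) :
    (child a).depth < (node i child).depth :=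
  Nat.lt_succ_of_le (Finset.le_sup (f := fun a => (child a).depth) (Finset.mem_univ a))

namespace ComputableIn

lemma const (d : ℕ) (b : L) : ComputableIn d (fun _ : Input ι α => b) :=
  ⟨.leaf b, Nat.zero_le _, fun _ => rfl⟩

lemma mono {F : Input ι α → L} (hF : ComputableIn d F) (hde : d ≤ e) : ComputableIn e F :=
  let ⟨T, hT, hTF⟩ := hF
  ⟨T, hT.trans hde, hTF⟩

lemma query (i : ι) {G : Fin (α i) → Input ι α → L} (hG : ∀ a, ComputableIn d (G a)) :
    ComputableIn (d + 1) (fun x => G (x i) x) := by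
  choose T hT hTG using hG
  exact ⟨.node i T, Nat.succ_le_succ (Finset.sup_le fun a _ => hT a), fun x => hTG _ _⟩

lemma bind {F : Input ι α → L} {G : L → Input ι α → L'} (hF : ComputableIn d F)
    (hG : ∀ a, ComputableIn e (G a)) : ComputableIn (d + e) (fun x => G (F x) x) := by
  obtain ⟨T, hT, hTF⟩ := hF
  obtain rfl : T.eval = F := funext hTF
  clear hTF
  induction T generalizing d with
  | leaf b => exact (hG b).mono (Nat.le_add_left _ _)
  | node i child ih =>
    obtain ⟨d, rfl⟩ : ∃ d', d = d' + 1 := ⟨d - 1, by simp only [DTree.depth] at hT; lia⟩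
    rw [Nat.add_right_comm]
    exact query i fun a => ih a (Nat.le_of_lt_succ ((DTree.depth_child_lt i child a).trans_le hT))

lemma map {F : Input ι α → L} (hF : ComputableIn d F) (g : L → L') :
    ComputableIn d (fun x => g (F x)) :=
  hF.bind (e := 0) fun a => const 0 (g a)

lemma pi {r : ℕ} {F : Fin r → Input ι α → L} (hF : ∀ j, ComputableIn d (F j)) :
    ComputableIn (r * d) (fun x j => F j x) := by
  induction r with
  | zero => exact ⟨.leaf Fin.elim0, Nat.zero_le _, fun _ => Subsingleton.elim _ _⟩
  | succ r ih =>
    have hcons := (hF 0).bind fun a => (ih fun j => hF j.succ).map (Fin.cons (α := fun _ => L) a)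
    convert hcons using 1
    · ring
    · exact funext fun x => (Fin.cons_self_tail fun j => F j x).symm

lemma of_dependsOn [Nonempty L] (s : Finset ι) {F : Input ι α → L} (hF : DependsOn F s) :
    ComputableIn s.card F := by
  classical
  induction s using Finset.induction_on generalizing F with
  | empty =>
    obtain _ | ⟨⟨x₀⟩⟩ := isEmpty_or_nonempty (Input ι α)
    · exact ⟨.leaf (Classical.arbitrary L), Nat.zero_le _, isEmptyElim⟩
    · exact ⟨.leaf (F x₀), Nat.zero_le _, fun x => hF (by simp)⟩
  | insert i s hi ih =>
    rw [Finset.card_insert_of_notMem hi]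
    have hquery := query i (G := fun a x => F (update x i a)) fun a => ih fun x y hxy => hF ?_
    · simpa only [update_eq_self] using hquery
    · intro j hj
      obtain rfl | hji := eq_or_ne j i
      · simp
      · simpa [hji] using hxy j (Finset.mem_of_mem_insert_of_ne hj hji)

end ComputableIn

lemma computableIn_card [Fintype ι] [Nonempty L] (F : Input ι α → L) :
    ComputableIn (Fintype.card ι) F :=
  .of_dependsOn Finset.univ (by simpa using dependsOn_univ F)

/-- The indices queried by a decision tree on a given input, in order. -/
def DTree.queries : DTree ι α L → Input ι α → List ι
  | leaf _, _ => []
  | node i child, x => i :: (child (x i)).queries x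

lemma DTree.length_queries_le (T : DTree ι α L) (x : Input ι α) :
    (T.queries x).length ≤ T.depth := by
  induction T with
  | leaf => exact Nat.zero_le _
  | node i child ih => exact (ih _).trans_lt (depth_child_lt i child (x i))

lemma DTree.eval_eq_of_forall_mem_queries (T : DTree ι α L) {x y : Input ι α}
    (h : ∀ i ∈ T.queries x, x i = y i) : T.eval x = T.eval y := by
  induction T with
  | leaf => rfl
  | node i child ih =>
    simp only [queries, List.mem_cons, forall_eq_or_imp] at h
    simp only [eval, ← h.1]
    exact ih _ h.2

lemma ComputableIn.queries_comp (T : DTree κ β L) {σ : Input ι α → Input κ β}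
    (hσ : ∀ j, ComputableIn d (fun x => σ x j)) :
    ComputableIn (T.depth * d) (fun x => T.queries (σ x)) := by
  induction T with
  | leaf => exact const _ _
  | node j child ih =>
    have hchild (a) : ComputableIn ((Finset.univ.sup fun a => (child a).depth) * d)
        (fun x => j :: (child a).queries (σ x)) :=
      ((ih a).map (j :: ·)).mono (Nat.mul_le_mul_right d
        (Nat.le_of_lt_succ (DTree.depth_child_lt j child a)))
    exact ((hσ j).bind hchild).mono (by simp only [DTree.depth]; lia)

end DecisionTrees

section RandomizedAlgorithms

variable {ι : Type} {α : ι → ℕ} {f : PartialFn ι α} {μ : PMF (DTree ι α (Option Bool))}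
  {d : ℕ} {ε : ℝ≥0∞}

/-- The randomized algorithm `μ`, a distribution over decision trees, makes at most `d` queries
and has error probability at most `ε` on every input in the domain of `f`. -/
structure ComputesWithError (μ : PMF (DTree ι α (Option Bool))) (d : ℕ) (ε : ℝ≥0∞)
    (f : PartialFn ι α) : Prop where
  depth_le : ∀ T ∈ μ.support, T.depth ≤ d
  error_le : ∀ x, f x ≠ none → μ.toOuterMeasure {T | T.eval x ≠ f x} ≤ ε

lemma toOuterMeasure_add_compl {τ : Type*} (μ : PMF τ) (s : Set τ) :
    μ.toOuterMeasure s + μ.toOuterMeasure sᶜ = 1 := by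
  let : MeasurableSpace τ := ⊤
  simpa [← PMF.toMeasure_apply_eq_toOuterMeasure] using
    prob_add_prob_compl (μ := μ.toMeasure) (s := s) trivial

lemma two_thirds_le_toOuterMeasure_iff {τ : Type*} {μ : PMF τ} {s : Set τ} :
    2 / 3 ≤ μ.toOuterMeasure s ↔ μ.toOuterMeasure sᶜ ≤ 1 / 3 := by
  have hsum : (2 / 3 : ℝ≥0∞) + 1 / 3 = 1 := by
    rw [ENNReal.div_add_div_same, two_add_one_eq_three]
    exact ENNReal.div_self (by norm_num) (by norm_num)
  have htotal := hsum.trans (toOuterMeasure_add_compl μ s).symm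
  have hs : μ.toOuterMeasure sᶜ ≠ ⊤ := ne_top_of_le_ne_top ENNReal.one_ne_top
    (le_add_self.trans (toOuterMeasure_add_compl μ s).le)
  constructor <;> intro h <;> by_contra! hlt
  · exact (ENNReal.add_lt_add_of_le_of_lt (by finiteness) h hlt).ne htotal
  · exact (ENNReal.add_lt_add_of_lt_of_le hs hlt h).ne htotal.symm

lemma Rq_eq_sInf_computesWithError (f : PartialFn ι α) :
    Rq f = sInf {d | ∃ μ, ComputesWithError μ d (1 / 3) f} := by
  refine congrArg sInf (Set.ext fun d => exists_congr fun μ => ?_)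
  refine ⟨fun ⟨hd, h⟩ => ⟨hd, fun x hx => ?_⟩, fun h => ⟨h.1, fun x b hx => ?_⟩⟩
  · obtain ⟨b, hb⟩ := Option.ne_none_iff_exists'.mp hx
    rw [hb]
    exact two_thirds_le_toOuterMeasure_iff.mp (h x b hb)
  · have herr := h.error_le x (by simp [hx])
    rw [hx] at herr
    exact two_thirds_le_toOuterMeasure_iff.mpr herr

lemma ComputesWithError.Rq_le (h : ComputesWithError μ d (1 / 3) f) : Rq f ≤ d :=
  (Rq_eq_sInf_computesWithError f).trans_le (Nat.sInf_le ⟨μ, h⟩)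

lemma ComputableIn.exists_computesWithError (h : ComputableIn d f) (ε : ℝ≥0∞) :
    ∃ μ, ComputesWithError μ d ε f := by
  obtain ⟨T, hT, hTf⟩ := h
  exact ⟨PMF.pure T, by simpa using hT, fun x _ => by simp [PMF.toOuterMeasure_pure_apply, hTf]⟩

lemma exists_computesWithError_Rq [Finite ι] (f : PartialFn ι α) :
    ∃ μ, ComputesWithError μ (Rq f) (1 / 3) f := by
  have := Fintype.ofFinite ι
  rw [Rq_eq_sInf_computesWithError]
  exact Nat.sInf_mem (s := {d | ∃ μ, ComputesWithError μ d (1 / 3) f})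
    ⟨_, (computableIn_card f).exists_computesWithError _⟩

lemma ComputesWithError.prob_queries_agree_le (h : ComputesWithError μ d ε f) {x y : Input ι α}
    (hx : f x ≠ none) (hy : f y ≠ none) (hxy : f x ≠ f y) :
    μ.toOuterMeasure {T | ∀ i ∈ T.queries x, x i = y i} ≤ 2 * ε :=
  calc μ.toOuterMeasure {T | ∀ i ∈ T.queries x, x i = y i}
    _ ≤ μ.toOuterMeasure ({T | T.eval x ≠ f x} ∪ {T | T.eval y ≠ f y}) :=
      measure_mono fun T hT => by
        by_contra! herr
        simp only [Set.mem_union, Set.mem_ofPred_eq, not_or, not_not] at herr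
        exact hxy (herr.1.symm.trans ((T.eval_eq_of_forall_mem_queries hT).trans herr.2))
    _ ≤ μ.toOuterMeasure {T | T.eval x ≠ f x} + μ.toOuterMeasure {T | T.eval y ≠ f y} :=
      measure_union_le _ _
    _ ≤ 2 * ε := by
      rw [two_mul]
      exact add_le_add (h.error_le x hx) (h.error_le y hy)

end RandomizedAlgorithms

section Minimax

lemma nonneg_of_forall_le_lt {E : Type*} [AddCommGroup E] [PartialOrder E] [IsOrderedAddMonoid E]
    [Module ℝ E] [PosSMulMono ℝ E] (g : E →ₗ[ℝ] ℝ) {p v : E} {u : ℝ} (h : ∀ q ≤ p, g q < u)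
    (hv : 0 ≤ v) : 0 ≤ g v := by
  by_contra! hlt
  have ht : 0 ≤ (u - g p) / -g v := div_nonneg (sub_nonneg.mpr (h p le_rfl).le) (by linarith)
  refine (h (p - ((u - g p) / -g v) • v) (sub_le_self p (smul_nonneg ht hv))).ne ?_
  rw [map_sub, map_smul, smul_eq_mul, div_neg, neg_mul, div_mul_cancel₀ _ hlt.ne]
  ring

open Matrix in
/-- Von Neumann's minimax theorem, with the value of the game allowed to vary between columns. -/
theorem exists_stdSimplex_vecMul_le {A X : Type*} [Fintype A] [Fintype X] [Nonempty A]
    (M : Matrix A X ℝ) (b : X → ℝ) (h : ∀ w ∈ stdSimplex ℝ X, ∃ a, (M *ᵥ w) a ≤ b ⬝ᵥ w) :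
    ∃ q ∈ stdSimplex ℝ A, q ᵥ* M ≤ b := by
  classical
  by_contra! hq
  have hdisj : Disjoint (Set.Iic b) (M.vecMulLinear '' stdSimplex ℝ A) := by
    rw [Set.disjoint_right]
    rintro _ ⟨q, hqA, rfl⟩ hqb
    exact hq q hqA hqb
  obtain ⟨g, u, v, hgu, huv, hgv⟩ := geometric_hahn_banach_closed_compact (convex_Iic b)
    isClosed_Iic ((convex_stdSimplex ℝ A).linear_image M.vecMulLinear)
    ((isCompact_stdSimplex ℝ A).image M.vecMulLinear.continuous_of_finiteDimensional) hdisj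
  have hg (y : X → ℝ) : g y = y ⬝ᵥ fun x => g (Pi.single x 1) := by
    conv_lhs => rw [pi_eq_sum_univ' y]
    simp [dotProduct]
  set w : X → ℝ := fun x => g (Pi.single x 1)
  have hw : 0 ≤ w := fun x => nonneg_of_forall_le_lt g.toLinearMap hgu (by simp)
  have hrow (a : A) : b ⬝ᵥ w < (M *ᵥ w) a := by
    rw [← hg b]
    have := hgv _ (Set.mem_image_of_mem _ (single_mem_stdSimplex ℝ a))
    simp only [vecMulLinear_apply, single_one_vecMul] at this
    exact (hgu b Set.self_mem_Iic).trans (huv.trans (this.trans_eq (hg _)))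
  obtain hsum | hsum := (Finset.sum_nonneg fun x _ => hw x : 0 ≤ ∑ x, w x).eq_or_lt
  · have hw0 : w = 0 :=
      funext fun x => (Fintype.sum_eq_zero_iff_of_nonneg hw).mp hsum.symm ▸ rfl
    simpa [hw0] using hrow (Classical.arbitrary A)
  · obtain ⟨a, ha⟩ := h ((∑ x, w x)⁻¹ • w) ⟨fun x => mul_nonneg (inv_nonneg.mpr hsum.le) (hw x),
      by simp [← Finset.mul_sum, hsum.ne']⟩
    rw [mulVec_smul, Pi.smul_apply, dotProduct_smul] at ha
    exact (hrow a).not_ge (le_of_smul_le_smul_left ha (inv_pos.mpr hsum))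

lemma exists_pmf_toOuterMeasure_eq_of_mem_stdSimplex {X : Type*} [Fintype X] {w : X → ℝ}
    (hw : w ∈ stdSimplex ℝ X) :
    ∃ ν : PMF X, ∀ s, ν.toOuterMeasure s = ENNReal.ofReal (∑ x, s.indicator w x) := by
  refine ⟨PMF.ofFintype (fun x => ENNReal.ofReal (w x)) ?_, fun s => ?_⟩
  · rw [← ENNReal.ofReal_sum_of_nonneg fun x _ => hw.1 x, hw.2, ENNReal.ofReal_one]
  · rw [PMF.toOuterMeasure_apply_fintype,
      ENNReal.ofReal_sum_of_nonneg fun x _ => Set.indicator_nonneg (fun x _ => hw.1 x) x]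
    exact Finset.sum_congr rfl fun x _ => by by_cases hx : x ∈ s <;> simp [hx]

/-- Minimax for zero-one losses: `B a` is the set of columns on which row `a` errs. -/
lemma exists_pmf_forall_toOuterMeasure_le {A X : Type*} [Finite A] [Finite X] [Nonempty A]
    (B : A → Set X) (ε : ℝ≥0∞) (h : ∀ ν : PMF X, ∃ a, ν.toOuterMeasure (B a) ≤ ε) :
    ∃ μ : PMF A, ∀ x, μ.toOuterMeasure {a | x ∈ B a} ≤ ε := by
  have := Fintype.ofFinite A
  have := Fintype.ofFinite X
  induction ε with
  | top => exact ⟨PMF.pure (Classical.arbitrary A), fun x => le_top⟩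
  | coe ε =>
    let M : Matrix A X ℝ := .of fun a => (B a).indicator 1
    have hmulVec (w a) : (M.mulVec w) a = ∑ x, (B a).indicator w x :=
      Finset.sum_congr rfl fun x _ => by by_cases hx : x ∈ B a <;> simp [M, hx]
    have hvecMul (q x) : (Matrix.vecMul q M) x = ∑ a, {a | x ∈ B a}.indicator q a :=
      Finset.sum_congr rfl fun a _ => by by_cases hx : x ∈ B a <;> simp [M, hx]
    have hval (w) (hw : w ∈ stdSimplex ℝ X) : ∃ a, (M.mulVec w) a ≤ (fun _ => (ε : ℝ)) ⬝ᵥ w := by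
      obtain ⟨ν, hν⟩ := exists_pmf_toOuterMeasure_eq_of_mem_stdSimplex hw
      obtain ⟨a, ha⟩ := h ν
      rw [hν, ← ENNReal.ofReal_coe_nnreal, ENNReal.ofReal_le_ofReal_iff ε.coe_nonneg] at ha
      exact ⟨a, by simpa [hmulVec, dotProduct, ← Finset.mul_sum, hw.2] using ha⟩
    obtain ⟨q, hq, hqM⟩ := exists_stdSimplex_vecMul_le M _ hval
    obtain ⟨μ, hμ⟩ := exists_pmf_toOuterMeasure_eq_of_mem_stdSimplex hq
    refine ⟨μ, fun x => ?_⟩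
    rw [hμ, ← ENNReal.ofReal_coe_nnreal, ← hvecMul]
    exact ENNReal.ofReal_le_ofReal (hqM x)

variable {ι : Type} {α : ι → ℕ}

/-- Yao's minimax principle. -/
theorem exists_computesWithError_of_forall_pmf [Finite ι] {f : PartialFn ι α} {d : ℕ} {ε : ℝ≥0∞}
    (h : ∀ ν : PMF {x // f x ≠ none}, ∃ F : Input ι α → Option Bool, ComputableIn d F ∧
      ν.toOuterMeasure {x | F x ≠ f x} ≤ ε) :
    ∃ μ, ComputesWithError μ d ε f := by
  let A := {F : Input ι α → Option Bool // ComputableIn d F}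
  have : Nonempty A := ⟨⟨_, .const d none⟩⟩
  obtain ⟨μ, hμ⟩ := exists_pmf_forall_toOuterMeasure_le
    (fun (F : A) => {x : {x // f x ≠ none} | F.1 x ≠ f x}) ε fun ν => by
      obtain ⟨F, hF, hε⟩ := h ν
      exact ⟨⟨F, hF⟩, hε⟩
  choose T hT hTF using fun F : A => F.2
  refine ⟨μ.map T, fun t ht => ?_, fun x hx => ?_⟩
  · obtain ⟨F, -, rfl⟩ := (PMF.mem_support_map_iff _ _ _).mp ht
    exact hT F
  · rw [PMF.toOuterMeasure_map_apply]
    refine le_of_eq_of_le (congrArg _ (Set.ext fun F => ?_)) (hμ ⟨x, hx⟩)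
    simp [hTF]

end Minimax

section Probability

variable {Z τ : Type*} [MeasurableSpace Z] [DiscreteMeasurableSpace Z] [Countable Z]

lemma exists_mem_support_measure_le (μ : PMF τ) (P : Measure Z)
    {A : τ → Set Z} {q : ℝ≥0∞} (h : ∀ z, μ.toOuterMeasure {t | z ∈ A t} ≤ q) :
    ∃ t ∈ μ.support, P (A t) ≤ q * P Set.univ := by
  have htsum : ∑' t, μ t * P (A t) ≤ q * P Set.univ := by
    calc ∑' t, μ t * P (A t)
      _ = ∑' t, ∫⁻ z, {t | z ∈ A t}.indicator μ t ∂P := by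
        refine tsum_congr fun t => ?_
        rw [← lintegral_indicator_const (MeasurableSet.of_discrete)]
        exact lintegral_congr fun z => by by_cases hz : z ∈ A t <;> simp [hz]
      _ = ∫⁻ z, μ.toOuterMeasure {t | z ∈ A t} ∂P := by
        simp_rw [lintegral_countable', PMF.toOuterMeasure_apply, ← ENNReal.tsum_mul_right]
        exact ENNReal.tsum_comm
      _ ≤ q * P Set.univ := (lintegral_mono h).trans_eq (lintegral_const q)
  by_contra! hlt
  obtain ⟨t₀, ht₀⟩ := μ.support_nonempty
  have hconst : ∑' t, μ t * (q * P Set.univ) = q * P Set.univ := by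
    rw [ENNReal.tsum_mul_right, μ.tsum_coe, one_mul]
  refine (htsum.trans_eq hconst.symm).not_gt (ENNReal.tsum_lt_tsum (i := t₀) ?_ (fun t => ?_) ?_)
  · exact hconst.trans_ne (hlt t₀ ht₀).ne_top
  · by_cases ht : t ∈ μ.support
    · exact mul_le_mul_right (hlt t ht).le _
    · simp [(μ.apply_eq_zero_iff t).mpr ht]
  · exact (ENNReal.mul_lt_mul_iff_right ht₀ (μ.apply_ne_top t₀)).mpr (hlt t₀ ht₀)

lemma exists_forall_mem_support_measure_iInter_le (μ : PMF τ) (P : Measure Z)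
    {A : τ → Set Z} {q : ℝ≥0∞} (h : ∀ z, μ.toOuterMeasure {t | z ∈ A t} ≤ q) (r : ℕ) :
    ∃ ts : Fin r → τ, (∀ j, ts j ∈ μ.support) ∧ P (⋂ j, A (ts j)) ≤ q ^ r * P Set.univ := by
  induction r with
  | zero => exact ⟨Fin.elim0, fun j => j.elim0, by simp⟩
  | succ r ih =>
    obtain ⟨ts, hts, hP⟩ := ih
    obtain ⟨t, ht, hPt⟩ := exists_mem_support_measure_le μ (P.restrict (⋂ j, A (ts j))) h
    refine ⟨Fin.cons t ts, Fin.cases ht hts, ?_⟩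
    rw [Measure.restrict_apply .of_discrete, Measure.restrict_apply_univ] at hPt
    calc P (⋂ j, A (Fin.cons (α := fun _ => τ) t ts j))
      _ ≤ P (A t ∩ ⋂ j, A (ts j)) := measure_mono fun z hz => by
        simp only [Set.mem_iInter, Fin.forall_fin_succ] at hz
        exact ⟨hz.1, Set.mem_iInter.mpr hz.2⟩
      _ ≤ q * (q ^ r * P Set.univ) := hPt.trans (mul_le_mul_right hP q)
      _ = q ^ (r + 1) * P Set.univ := by ring

lemma exists_measure_le_div_add {Ω κ : Type*} [MeasurableSpace Ω] [Fintype κ] [Nonempty κ]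
    (P : Measure Ω) [IsProbabilityMeasure P] {B : κ → Set Ω} (hB : ∀ i, MeasurableSet (B i))
    {A : Set Ω} (hA : MeasurableSet A) {m : ℕ} (h : ∀ ω ∉ A, {i | ω ∈ B i}.ncard ≤ m) :
    ∃ i, P (B i) ≤ m / Fintype.card κ + P A := by
  classical
  have hsum : ∑ i, P (B i \ A) ≤ m := by
    calc ∑ i, P (B i \ A)
      _ = ∫⁻ ω, ∑ i, (B i \ A).indicator 1 ω ∂P := by
        rw [lintegral_finsetSum _ fun i _ => measurable_one.indicator ((hB i).diff hA)]
        simp [lintegral_indicator_one ((hB _).diff hA)]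
      _ ≤ ∫⁻ _, m ∂P := lintegral_mono fun ω => by
        by_cases hω : ω ∈ A
        · simp [hω]
        · have hind (i) : (B i \ A).indicator 1 ω = if ω ∈ B i then (1 : ℝ≥0∞) else 0 := by
            simp [Set.indicator_apply, hω]
          simp only [hind, Finset.sum_boole, Nat.cast_le]
          simpa only [← Set.ncard_coe_finset, Finset.coe_filter_univ] using h ω hω
      _ = m := by simp
  have hdiff : ∃ i, P (B i \ A) ≤ m / Fintype.card κ := by
    by_contra! hlt
    have := ENNReal.sum_lt_sum_of_nonempty Finset.univ_nonempty fun i _ => hlt i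
    rw [Finset.sum_const, Finset.card_univ, nsmul_eq_mul,
      ENNReal.mul_div_cancel (by simp) (by simp)] at this
    exact this.not_ge hsum
  obtain ⟨i, hi⟩ := hdiff
  exact ⟨i, (tsub_le_iff_right.mp le_measure_sdiff).trans (add_le_add_left hi _)⟩

lemma exists_lintegral_update_le {κ : Type*} [Fintype κ] [DecidableEq κ] {X : κ → Type*}
    [∀ i, MeasurableSpace (X i)] (ν : ∀ i, Measure (X i)) [∀ i, IsProbabilityMeasure (ν i)]
    {g : (∀ i, X i) → ℝ≥0∞} (hg : Measurable g) (i : κ) :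
    ∃ y, ∫⁻ x, g (update y i x) ∂ν i ≤ ∫⁻ z, g z ∂Measure.pi ν := by
  have hidem : ∫⋯∫⁻_{i}, ∫⋯∫⁻_{i}, g ∂ν ∂ν = ∫⋯∫⁻_{i}, g ∂ν := by
    refine funext fun z => ?_
    rw [lmarginal_singleton]
    simp [lmarginal_update_of_mem]
  obtain ⟨y, hy⟩ := exists_le_lintegral (μ := Measure.pi ν) (hg.lmarginal ν (s := {i})).aemeasurable
  rw [lintegral_eq_of_lmarginal_eq {i} (hg.lmarginal ν) hg hidem, lmarginal_singleton] at hy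
  exact ⟨y, hy⟩

lemma exists_measure_update_mem_le {κ : Type*} [Fintype κ] [DecidableEq κ] {X : κ → Type*}
    [∀ i, MeasurableSpace (X i)] (ν : ∀ i, Measure (X i)) [∀ i, IsProbabilityMeasure (ν i)]
    {W : Set (∀ i, X i)} (hW : MeasurableSet W) (i : κ) :
    ∃ y, ν i {x | update y i x ∈ W} ≤ Measure.pi ν W := by
  obtain ⟨y, hy⟩ := exists_lintegral_update_le ν (measurable_one.indicator hW) i
  rw [lintegral_indicator_one hW] at hy
  exact ⟨y, (lintegral_indicator_one (hW.preimage (measurable_update y))).symm.trans_le hy⟩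

end Probability

section Halving

variable {c : ℕ} {S : Finset (Fin c → Bool)} {b b' : Fin c → Bool} {i : Fin c}

/-- The strings of `S` that agree with `b` on the first `m` bits. -/
def agreeing (S : Finset (Fin c → Bool)) (b : Fin c → Bool) (m : Fin (c + 1)) :
    Finset (Fin c → Bool) :=
  S.filter fun s => ∀ j : Fin c, j.castSucc < m → s j = b j

/-- The halving algorithm's prediction of the bit `b i` from the preceding bits of `b`: the
majority vote among the strings of `S` that agree with those bits. -/
def halvingPrediction (S : Finset (Fin c → Bool)) (b : Fin c → Bool) (i : Fin c) : Bool :=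
  decide (((agreeing S b i.castSucc).filter fun s => s i = false).card ≤
    ((agreeing S b i.castSucc).filter fun s => s i = true).card)

lemma halvingPrediction_congr (S : Finset (Fin c → Bool)) (h : ∀ j < i, b j = b' j) :
    halvingPrediction S b i = halvingPrediction S b' i := by
  have hagree : agreeing S b i.castSucc = agreeing S b' i.castSucc :=
    Finset.filter_congr fun s _ => forall₂_congr fun j hj => by rw [h j hj]
  simp only [halvingPrediction, hagree]

lemma agreeing_succ (S : Finset (Fin c → Bool)) (b : Fin c → Bool) (i : Fin c) :
    agreeing S b i.succ = (agreeing S b i.castSucc).filter fun s => s i = b i := by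
  ext s
  simp only [agreeing, Finset.mem_filter, Fin.castSucc_lt_castSucc_iff, Fin.castSucc_lt_succ_iff,
    le_iff_lt_or_eq, or_imp, forall_and, forall_eq, and_assoc]

lemma two_mul_card_agreeing_succ_le (h : halvingPrediction S b i ≠ b i) :
    2 * (agreeing S b i.succ).card ≤ (agreeing S b i.castSucc).card := by
  have hsplit := Finset.card_filter_add_card_filter_not (s := agreeing S b i.castSucc)
    fun s => s i = true
  simp only [Bool.not_eq_true] at hsplit
  rw [agreeing_succ]
  cases hb : b i <;> simp only [halvingPrediction, hb, ne_eq, decide_eq_false_iff_not,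
    decide_eq_true_eq, not_not] at h <;> lia

lemma prod_mul_le_of_forall_mul_succ_le {R : Type*} [CommMonoid R] [Preorder R] [MulLeftMono R]
    {c : ℕ} (w : Fin c → R) (a : Fin (c + 1) → R)
    (h : ∀ i : Fin c, w i * a i.succ ≤ a i.castSucc) : (∏ i, w i) * a (Fin.last c) ≤ a 0 := by
  induction c with
  | zero => simp
  | succ c ih =>
    rw [Fin.prod_univ_castSucc, mul_assoc]
    exact (mul_le_mul_right (h (Fin.last c)) _).trans
      (ih (fun i => w i.castSucc) (fun i => a i.castSucc) fun i => h i.castSucc)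

lemma ncard_halvingPrediction_ne_le (hb : b ∈ S) :
    {i | halvingPrediction S b i ≠ b i}.ncard ≤ Nat.log 2 S.card := by
  have hprod := prod_mul_le_of_forall_mul_succ_le
    (fun i => if halvingPrediction S b i ≠ b i then 2 else 1) (fun m => (agreeing S b m).card)
    fun i => by
      split_ifs with hi
      · exact two_mul_card_agreeing_succ_le hi
      · rw [one_mul, agreeing_succ]
        exact Finset.card_filter_le _ _
  have hlast : 0 < (agreeing S b (Fin.last c)).card :=
    Finset.card_pos.mpr ⟨b, by simp [agreeing, hb]⟩
  rw [Finset.prod_ite, Finset.prod_const, Finset.prod_const_one, mul_one,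
    ← Set.ncard_coe_finset, Finset.coe_filter_univ] at hprod
  refine Nat.le_log_of_pow_le one_lt_two ?_
  exact (Nat.le_mul_of_pos_right _ hlast).trans (hprod.trans (Finset.card_filter_le _ _))

end Halving

section CheatSheets

variable {ι : Type} {α : ι → ℕ} {c k d r : ℕ} {L : Type}

/-- The cheat sheet input consisting of the copies `X` and the array of cells `Y`. -/
def csInput (X : Fin c → Input ι α) (Y : Fin (2 ^ c) → Fin c → Fin k → Fin 2) :
    Input (CSIdx ι c k) (csAlphabet α c k)
  | .inl p => X p.1 p.2
  | .inr q => Y q.1 q.2.1 q.2.2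

lemma csX_csInput (X : Fin c → Input ι α) (Y : Fin (2 ^ c) → Fin c → Fin k → Fin 2) :
    csX (csInput X Y) = X := rfl

lemma csY_csInput (X : Fin c → Input ι α) (Y : Fin (2 ^ c) → Fin c → Fin k → Fin 2) :
    csY (csInput X Y) = Y := rfl

/-- The cells in which the decision tree `T` queries at least one bit on the input `z`. -/
def cellsRead (T : DTree (CSIdx ι c k) (csAlphabet α c k) L)
    (z : Input (CSIdx ι c k) (csAlphabet α c k)) : Finset (Fin (2 ^ c)) :=
  ((T.queries z).filterMap (Sum.elim (fun _ => none) fun q => some q.1)).toFinset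

lemma mem_cellsRead {T : DTree (CSIdx ι c k) (csAlphabet α c k) L}
    {z : Input (CSIdx ι c k) (csAlphabet α c k)} {ℓ : Fin (2 ^ c)} :
    ℓ ∈ cellsRead T z ↔ ∃ p, Sum.inr (ℓ, p) ∈ T.queries z := by
  simp [cellsRead]

lemma card_cellsRead_le (T : DTree (CSIdx ι c k) (csAlphabet α c k) L)
    (z : Input (CSIdx ι c k) (csAlphabet α c k)) : (cellsRead T z).card ≤ T.depth :=
  (List.toFinset_card_le _).trans ((List.length_filterMap_le _ _).trans (T.length_queries_le z))

lemma csInput_eq_csInput_update_of_notMem_cellsRead {T : DTree (CSIdx ι c k) (csAlphabet α c k) L}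
    {X : Fin c → Input ι α} {Y : Fin (2 ^ c) → Fin c → Fin k → Fin 2} {ℓ : Fin (2 ^ c)}
    (hℓ : ℓ ∉ cellsRead T (csInput X Y)) (y : Fin c → Fin k → Fin 2) :
    ∀ i ∈ T.queries (csInput X Y), csInput X Y i = csInput X (update Y ℓ y) i := by
  rintro (p | ⟨m, p⟩) hm
  · rfl
  · have hmℓ : m ≠ ℓ := fun h => hℓ (mem_cellsRead.mpr ⟨p, h ▸ hm⟩)
    exact (congrFun₂ (update_of_ne hmℓ y Y) p.1 p.2).symm

lemma computableIn_cellsRead_update (T : DTree (CSIdx ι c k) (csAlphabet α c k) L)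
    (X : Fin c → Input ι α) (Y : Fin (2 ^ c) → Fin c → Fin k → Fin 2) (i : Fin c) :
    ComputableIn T.depth (fun x => cellsRead T (csInput (update X i x) Y)) := by
  rw [← mul_one T.depth]
  refine (ComputableIn.queries_comp T fun q => ?_).map fun l =>
    (l.filterMap (Sum.elim (fun _ => none) fun q => some q.1)).toFinset
  obtain ⟨j, p⟩ | q := q
  · obtain rfl | hj := eq_or_ne j i
    · simp only [csInput, update_self]
      exact .query p (G := fun a _ => a) (.const 0)
    · simp only [csInput, update_of_ne hj]
      exact .const 1 _
  · exact .const 1 _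

variable {f : PartialFn ι α} {φ : Input ι α → (Fin k → Fin 2) → Bool} {X : Fin c → Input ι α}
  {b : Fin c → Bool}

lemma cheatSheet_csInput_zero {hk : 0 < k} (hφ : IsCertifying hk f φ) (hc : 0 < c) :
    cheatSheet c f φ (csInput X 0) = some false := by
  have hnot : ¬ CSCond f φ (csInput X (0 : Fin (2 ^ c) → Fin c → Fin k → Fin 2)) := by
    rintro ⟨b, -, hY⟩
    exact Bool.false_ne_true ((hφ.2.2.2 _).symm.trans (hY ⟨0, hc⟩))
  simp [cheatSheet, ofProp, hnot]

lemma exists_cheatSheet_csInput_update_eq_true {hk : 0 < k} (hφ : IsCertifying hk f φ)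
    (hb : ∀ i, f (X i) = some (b i)) :
    ∃ y, cheatSheet c f φ (csInput X (update 0 (binToFin c b) y)) = some true := by
  choose y hy using fun i => hφ.2.2.1 (X i) (b i) (hb i)
  have hcond : CSCond f φ (csInput X (update 0 (binToFin c b) y)) :=
    ⟨b, hb, fun i => by simpa only [csX_csInput, csY_csInput, update_self] using hy i⟩
  exact ⟨y, by simp [cheatSheet, ofProp, hcond]⟩

lemma ComputesWithError.prob_binToFin_notMem_cellsRead_le
    {μ : PMF (DTree (CSIdx ι c k) (csAlphabet α c k) (Option Bool))} {ε : ℝ≥0∞}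
    (hμ : ComputesWithError μ d ε (cheatSheet c f φ)) {hk : 0 < k} (hφ : IsCertifying hk f φ)
    (hc : 0 < c) (hb : ∀ i, f (X i) = some (b i)) :
    μ.toOuterMeasure {T | binToFin c b ∉ cellsRead T (csInput X 0)} ≤ 2 * ε := by
  have hfalse := cheatSheet_csInput_zero (X := X) hφ hc
  obtain ⟨y, htrue⟩ := exists_cheatSheet_csInput_update_eq_true hφ hb
  refine le_trans (measure_mono fun T hT => ?_)
    (hμ.prob_queries_agree_le (x := csInput X 0) (y := csInput X (update 0 (binToFin c b) y))
      (by simp [hfalse]) (by simp [htrue]) (by simp [hfalse, htrue]))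
  exact csInput_eq_csInput_update_of_notMem_cellsRead hT y

lemma binToFin_eq_finFunctionFinEquiv (b : Fin c → Bool) :
    binToFin c b = finFunctionFinEquiv (finTwoEquiv.symm ∘ b) := by
  have hsum : ∑ i, (if b i then 2 ^ (i : ℕ) else 0) =
      (finFunctionFinEquiv (finTwoEquiv.symm ∘ b) : ℕ) := by
    rw [finFunctionFinEquiv_apply]
    exact Finset.sum_congr rfl fun i _ => by cases hb : b i <;> simp [finTwoEquiv, hb]
  exact Fin.ext ((congrArg (· % 2 ^ c) hsum).trans (Nat.mod_eq_of_lt (Fin.isLt _)))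

lemma binToFin_injective (c : ℕ) : Injective (binToFin c) := by
  rw [funext binToFin_eq_finFunctionFinEquiv]
  exact finFunctionFinEquiv.injective.comp finTwoEquiv.symm.injective.comp_left

/-- The value strings of the copies that remain plausible once the trees `ts` have been run on the
copies `X` with an all-zero array of cells: those whose cell is read by one of the trees. -/
noncomputable def candidates (ts : Fin r → DTree (CSIdx ι c k) (csAlphabet α c k) L)
    (X : Fin c → Input ι α) : Finset (Fin c → Bool) :=
  Finset.univ.filter fun b => ∃ j, binToFin c b ∈ cellsRead (ts j) (csInput X 0)

lemma card_candidates_le {ts : Fin r → DTree (CSIdx ι c k) (csAlphabet α c k) L}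
    (hts : ∀ j, (ts j).depth ≤ d) (X : Fin c → Input ι α) : (candidates ts X).card ≤ r * d := by
  calc (candidates ts X).card
    _ ≤ (Finset.univ.biUnion fun j => cellsRead (ts j) (csInput X 0)).card :=
      Finset.card_le_card_of_injOn (binToFin c) (fun b hb => by simpa [candidates] using hb)
        (binToFin_injective c).injOn
    _ ≤ r * d := by
      simpa using Finset.card_biUnion_le_card_mul (Finset.univ : Finset (Fin r)) _ d
        fun j _ => (card_cellsRead_le (ts j) (csInput X 0)).trans (hts j)

lemma computableIn_candidates_update {ts : Fin r → DTree (CSIdx ι c k) (csAlphabet α c k) L}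
    (hts : ∀ j, (ts j).depth ≤ d) (X : Fin c → Input ι α) (i : Fin c) :
    ComputableIn (r * d) (fun x => candidates ts (update X i x)) :=
  (ComputableIn.pi fun j => (computableIn_cellsRead_update (ts j) X 0 i).mono (hts j)).map
    fun cells => Finset.univ.filter fun b => ∃ j, binToFin c b ∈ cells j

end CheatSheets

section Predictor

variable {ι : Type} {α : ι → ℕ} {c k d : ℕ} {ε : ℝ≥0∞} {f : PartialFn ι α}
  {φ : Input ι α → (Fin k → Fin 2) → Bool}
  {μ : PMF (DTree (CSIdx ι c k) (csAlphabet α c k) (Option Bool))}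

lemma ComputesWithError.exists_prob_halvingPrediction_ne_le
    (hμ : ComputesWithError μ d ε (cheatSheet c f φ)) {hk : 0 < k} (hφ : IsCertifying hk f φ)
    (hc : 0 < c) {Z : Type*} [MeasurableSpace Z] [DiscreteMeasurableSpace Z] [Countable Z]
    (P : Measure Z) [IsProbabilityMeasure P] {X : Z → Fin c → Input ι α} {b : Z → Fin c → Bool}
    (hb : ∀ z i, f (X z i) = some (b z i)) (r : ℕ) :
    ∃ ts : Fin r → DTree (CSIdx ι c k) (csAlphabet α c k) (Option Bool),
      (∀ j, (ts j).depth ≤ d) ∧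
      ∃ i, P {z | halvingPrediction (candidates ts (X z)) (b z) i ≠ b z i} ≤
        Nat.log 2 (r * d) / c + (2 * ε) ^ r := by
  obtain ⟨ts, hts, hmissed⟩ := exists_forall_mem_support_measure_iInter_le μ P
    (A := fun T => {z | binToFin c (b z) ∉ cellsRead T (csInput (X z) 0)})
    (fun z => hμ.prob_binToFin_notMem_cellsRead_le hφ hc (hb z)) r
  have hdepth (j) : (ts j).depth ≤ d := hμ.depth_le _ (hts j)
  have hmistakes : ∀ z ∉ ⋂ j, {z | binToFin c (b z) ∉ cellsRead (ts j) (csInput (X z) 0)},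
      {i | halvingPrediction (candidates ts (X z)) (b z) i ≠ b z i}.ncard ≤ Nat.log 2 (r * d) := by
    intro z hz
    have hbz : b z ∈ candidates ts (X z) := by simpa [candidates] using hz
    exact (ncard_halvingPrediction_ne_le hbz).trans
      (Nat.log_mono_right (card_candidates_le hdepth (X z)))
  have : NeZero c := ⟨hc.ne'⟩
  obtain ⟨i, hi⟩ := exists_measure_le_div_add P
    (B := fun i => {z | halvingPrediction (candidates ts (X z)) (b z) i ≠ b z i})
    (fun _ => .of_discrete) .of_discrete hmistakes
  rw [Fintype.card_fin] at hi
  rw [measure_univ, mul_one] at hmissed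
  exact ⟨ts, hdepth, i, hi.trans (add_le_add_right hmissed _)⟩

/-- Plant the given input in a position `i` of a tuple drawn from `ν`, fix the other positions,
whose values are then known, and predict the bit at position `i`. -/
lemma ComputesWithError.exists_computableIn_prob_ne_le [Finite ι]
    (hμ : ComputesWithError μ d ε (cheatSheet c f φ)) {hk : 0 < k} (hφ : IsCertifying hk f φ)
    (hc : 0 < c) (r : ℕ) (ν : PMF {x // f x ≠ none}) :
    ∃ F : Input ι α → Option Bool, ComputableIn (r * d) F ∧
      ν.toOuterMeasure {x | F x ≠ f x} ≤ Nat.log 2 (r * d) / c + (2 * ε) ^ r := by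
  choose b hb using fun x : {x // f x ≠ none} => Option.ne_none_iff_exists'.mp x.2
  obtain ⟨ts, hts, i, hi⟩ := hμ.exists_prob_halvingPrediction_ne_le hφ hc
    (Measure.pi fun _ : Fin c => ν.toMeasure) (X := fun z j => z j) (b := fun z j => b (z j))
    (fun z j => hb (z j)) r
  set W := {z : Fin c → {x // f x ≠ none} |
    halvingPrediction (candidates ts fun j => z j) (fun j => b (z j)) i ≠ b (z i)}
  obtain ⟨y, hy⟩ := exists_measure_update_mem_le (fun _ : Fin c => ν.toMeasure)
    (W := W) .of_discrete i
  let X : Fin c → Input ι α := fun j => y j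
  let guess S := halvingPrediction S (fun j => b (y j)) i
  have hguess (x : {x // f x ≠ none}) :
      some (guess (candidates ts (update X i x))) ≠ f x ↔ update y i x ∈ W := by
    have hX : (fun j => (update y i x j : Input ι α)) = update X i x :=
      funext fun j => apply_update (fun _ => Subtype.val) y i x j
    have hbits : halvingPrediction (candidates ts (update X i x)) (fun j => b (update y i x j)) i =
        guess (candidates ts (update X i x)) :=
      halvingPrediction_congr _ fun j hj => by rw [update_of_ne hj.ne]
    simp [W, hX, hbits, hb x]
  refine ⟨fun x => some (guess (candidates ts (update X i x))),
    (computableIn_candidates_update hts X i).map (some ∘ guess), ?_⟩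
  rw [← ν.toMeasure_apply_eq_toOuterMeasure]
  exact (congrArg _ (Set.ext hguess)).trans_le (hy.trans hi)

end Predictor

lemma div_add_pow_le_one_third {m c : ℕ} (h : 10 * m ≤ c) :
    (m / c + (2 * (1 / 3)) ^ 4 : ℝ≥0∞) ≤ 1 / 3 := by
  have hm : (m / c : ℝ≥0∞) ≤ 1 / 10 := by
    refine ENNReal.div_le_of_le_mul ?_
    rw [one_div, mul_comm, ← div_eq_mul_inv, ENNReal.le_div_iff_mul_le (by simp) (by simp)]
    exact_mod_cast (mul_comm m 10).trans_le h
  calc (m / c + (2 * (1 / 3)) ^ 4 : ℝ≥0∞)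
    _ ≤ 1 / 10 + (2 * (1 / 3)) ^ 4 := add_le_add_left hm _
    _ ≤ 1 / 3 := by
      rw [← ENNReal.toReal_le_toReal (by finiteness) (by finiteness),
        ENNReal.toReal_add (by finiteness) (by finiteness)]
      norm_num

end QC

open QC in
theorem cheat_sheet_randomized_lower_bound_general {ι : Type} [Fintype ι] {α : ι → ℕ} {c k : ℕ}
    {hk : 0 < k} {f : PartialFn ι α} {φ : Input ι α → (Fin k → Fin 2) → Bool}
    (hφ : IsCertifying hk f φ) (hc : 0 < c) (hcard : 10 * Nat.log 2 (Fintype.card ι) ≤ c) :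
    Rq f ≤ 4 * Rq (cheatSheet c f φ) := by
  obtain hle | hlt := le_or_gt (Fintype.card ι) (4 * Rq (cheatSheet c f φ))
  · obtain ⟨μ, hμ⟩ := (computableIn_card f).exists_computesWithError (1 / 3)
    exact hμ.Rq_le.trans hle
  · obtain ⟨μ, hμ⟩ := exists_computesWithError_Rq (cheatSheet c f φ)
    have hlog : 10 * Nat.log 2 (4 * Rq (cheatSheet c f φ)) ≤ c :=
      (Nat.mul_le_mul_left 10 (Nat.log_mono_right hlt.le)).trans hcard
    obtain ⟨μ', hμ'⟩ := exists_computesWithError_of_forall_pmf fun ν => by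
      obtain ⟨F, hF, hν⟩ := hμ.exists_computableIn_prob_ne_le hφ hc 4 ν
      exact ⟨F, hF, hν.trans (div_add_pow_le_one_third hlog)⟩
    exact hμ'.Rq_le

/-- For any partial `f : D → {0,1}` with `D ⊆ [M]^n` and any
certifying function `φ` for `f`, the cheat sheet version of `f` with
`c = 10·log₂ n` copies satisfies `R(f_CS) = Ω(R(f)/c) = Ω̃(R(f))`. -/
theorem cheat_sheet_randomized_lower_bound :
    ∃ C : ℝ, 0 < C ∧ ∀ (n M k : ℕ) (hk : 0 < k)
      (f : QC.PartialFn (Fin n) fun _ => M)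
      (φ : QC.Input (Fin n) (fun _ => M) → (Fin k → Fin 2) → Bool),
      QC.IsCertifying hk f φ → 2 ≤ n →
      C * ((QC.Rq f : ℝ) / (10 * Nat.log 2 n : ℝ)) ≤
        (QC.Rq (QC.cheatSheet (10 * Nat.log 2 n) f φ) : ℝ) := by
  refine ⟨1 / 4, by norm_num, fun n M k hk f φ hφ hn => ?_⟩
  have hlog : 1 ≤ 10 * Nat.log 2 n := by linarith [Nat.log_pos one_lt_two hn]
  have hgeneral : QC.Rq f ≤ 4 * QC.Rq (QC.cheatSheet (10 * Nat.log 2 n) f φ) :=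
    cheat_sheet_randomized_lower_bound_general hφ hlog (by rw [Fintype.card_fin])
  have hdiv : (QC.Rq f : ℝ) / (10 * Nat.log 2 n : ℝ) ≤ QC.Rq f :=
    div_le_self (Nat.cast_nonneg _) (mod_cast hlog)
  rify at hgeneral
  linarith
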